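/- In H_{1,n+1}(q), for every n ≥ 1 and every integer k ≥ 1 the following identity holds: t_n^{−k} = Σ_{j=−k+1}^{−1} q^{j+1}(q^{−1}−1) t_{n−1}^j t_n^{−k−j} g_n^{−1} + q^{−k+1} g_n^{−1} t_{n−1}^{−k} g_n^{−1}. -/

import Mathlib

/-!
Write `a = t_{n-1}⁻¹`, `b = t_n⁻¹`, `h = g_n⁻¹`, so that `b = h a h`. The quadratic relation gives
`h² = q⁻¹ + (q⁻¹ - 1) h`, hence
`b (h a^k h) = h a h² a^k h = q⁻¹ h a^(k+1) h + (q⁻¹ - 1) b a^k h`.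
Since `a` and `b` commute, the identity follows by induction on `k`, multiplying by `b` on the left
(`pow_expansion`).

The commutation of `t_{n-1}` and `t_n` is equivalent to the type B braid relation
`g_n t_{n-1} g_n t_{n-1} = t_{n-1} g_n t_{n-1} g_n`. It is proved by induction on `n`
(`looping_braid`), from the braid relations and the fact that `t_i` commutes with `g_j` for
`j ≥ i + 2` (`looping_comm`).
-/

/-- Integer power of an element `x` with chosen two-sided inverse `xinv`. -/
noncomputable def zp {A : Type*} [Monoid A] (x xinv : A) (m : ℤ) : A :=
  if 0 ≤ m then x ^ m.toNat else xinv ^ (-m).toNat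

/-- The looping element `t_i` commutes with the generators `g_j` that are far from it. -/
lemma looping_comm {A : Type*} [Ring A] (t : A) (g tt : ℕ → A)
    (hct : ∀ i, 2 ≤ i → t * g i = g i * t)
    (hcm : ∀ i j, 1 ≤ i → i + 2 ≤ j → g i * g j = g j * g i)
    (htt0 : tt 0 = t) (htts : ∀ i, tt (i+1) = g (i+1) * tt i * g (i+1)) (i : ℕ) :
    ∀ j, i + 2 ≤ j → Commute (tt i) (g j) := by
  induction i with
  | zero => intro j hj; rw [htt0]; exact hct j (by omega)
  | succ i ih =>
    intro j hj
    have h1 : Commute (g (i+1)) (g j) := hcm (i+1) j (by omega) (by omega)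
    rw [htts]
    exact (h1.mul_left (ih j (by omega))).mul_left h1

/-- The type B braid relation passes from `(r, u)` to `(s, r u r)` when `r, s` satisfy the braid
relation and `u` commutes with `s`. -/
lemma braid_step {A : Type*} [Monoid A] (s r u : A) (hsu : u * s = s * u)
    (hrs : r * s * r = s * r * s) (hru : r * u * r * u = u * r * u * r) :
    s * (r * u * r) * s * (r * u * r) = (r * u * r) * s * (r * u * r) * s := by
  calc s * (r * u * r) * s * (r * u * r)
      = s * r * u * (r * s * r) * u * r := by simp only [mul_assoc]
    _ = s * r * (u * s) * r * (s * u) * r := by rw [hrs]; simp only [mul_assoc]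
    _ = s * r * (s * u) * r * (u * s) * r := by rw [hsu]
    _ = (s * r * s) * u * r * u * s * r := by simp only [mul_assoc]
    _ = r * s * (r * u * r * u) * s * r := by rw [← hrs]; simp only [mul_assoc]
    _ = r * (s * u) * r * u * (r * s * r) := by rw [hru]; simp only [mul_assoc]
    _ = r * u * s * r * (u * s) * r * s := by rw [hrs, ← hsu]; simp only [mul_assoc]
    _ = r * u * (s * r * s) * u * r * s := by rw [hsu]; simp only [mul_assoc]
    _ = (r * u * r) * s * (r * u * r) * s := by rw [← hrs]; simp only [mul_assoc]

lemma looping_braid {A : Type*} [Ring A] (t : A) (g tt : ℕ → A)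
    (hbt : g 1 * t * g 1 * t = t * g 1 * t * g 1)
    (hct : ∀ i, 2 ≤ i → t * g i = g i * t)
    (hbr : ∀ i, 1 ≤ i → g i * g (i+1) * g i = g (i+1) * g i * g (i+1))
    (hcm : ∀ i j, 1 ≤ i → i + 2 ≤ j → g i * g j = g j * g i)
    (htt0 : tt 0 = t) (htts : ∀ i, tt (i+1) = g (i+1) * tt i * g (i+1)) (i : ℕ) :
    g (i+1) * tt i * g (i+1) * tt i = tt i * g (i+1) * tt i * g (i+1) := by
  induction i with
  | zero => simpa [htt0] using hbt
  | succ i ih =>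
    rw [htts]
    exact braid_step _ _ _ (looping_comm t g tt hct hcm htt0 htts i (i+2) le_rfl)
      (hbr (i+1) (by omega)) ih

lemma looping_inv {A : Type*} [Ring A] (t tinv : A) (g ginv tt ttinv : ℕ → A)
    (ht : t * tinv = 1) (hg : ∀ i, g i * ginv i = 1)
    (htt0 : tt 0 = t) (htts : ∀ i, tt (i+1) = g (i+1) * tt i * g (i+1))
    (htti0 : ttinv 0 = tinv)
    (httis : ∀ i, ttinv (i+1) = ginv (i+1) * ttinv i * ginv (i+1)) (i : ℕ) :
    tt i * ttinv i = 1 := by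
  induction i with
  | zero => rw [htt0, htti0, ht]
  | succ i ih =>
    calc tt (i+1) * ttinv (i+1)
        = g (i+1) * (tt i * ((g (i+1) * ginv (i+1)) * ttinv i)) * ginv (i+1) := by
          rw [htts, httis]; simp only [mul_assoc]
      _ = 1 := by rw [hg, one_mul, ih, mul_one, hg]

/-- The induction on the exponent, with the summation index `j = -(i + 1)` and `p = q⁻¹`. -/
lemma pow_expansion {R : Type*} [CommRing R] {A : Type*} [Ring A] [Algebra R A]
    (p : R) (a b h : A) (hb : b = h * a * h) (hab : Commute a b)
    (hh : h * h = p • (1 : A) + (p - 1) • h) (m : ℕ) :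
    b ^ (m + 1) = (∑ i ∈ Finset.range m,
        (p ^ i * (p - 1)) • (a ^ (i + 1) * b ^ (m - i) * h)) + p ^ m • (h * a ^ (m + 1) * h) := by
  induction m with
  | zero => simp [hb]
  | succ m ih =>
    have key : b * (h * a ^ (m + 1) * h)
        = p • (h * a ^ (m + 2) * h) + (p - 1) • (a ^ (m + 1) * b * h) := by
      calc b * (h * a ^ (m + 1) * h) = h * a * (h * h) * (a ^ (m + 1) * h) := by
            rw [hb]; simp only [mul_assoc]
        _ = p • (h * (a * a ^ (m + 1)) * h) + (p - 1) • ((h * a * h) * a ^ (m + 1) * h) := by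
            rw [hh]
            simp only [mul_add, add_mul, mul_smul_comm, smul_mul_assoc, mul_one, mul_assoc]
        _ = _ := by rw [← hb, ← pow_succ', (hab.pow_left (m + 1)).eq]
    rw [pow_succ', ih, mul_add, Finset.mul_sum, mul_smul_comm, key, Finset.sum_range_succ]
    have hs : ∀ i ∈ Finset.range m,
        b * ((p ^ i * (p - 1)) • (a ^ (i + 1) * b ^ (m - i) * h))
          = (p ^ i * (p - 1)) • (a ^ (i + 1) * b ^ (m + 1 - i) * h) := by
      intro i hi
      have hi' : m + 1 - i = (m - i) + 1 := by have := Finset.mem_range.mp hi; omega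
      rw [mul_smul_comm, hi', pow_succ' b, ← mul_assoc, ← mul_assoc, ← (hab.pow_left (i + 1)).eq,
        mul_assoc (a ^ (i + 1))]
    rw [Finset.sum_congr rfl hs, Nat.add_sub_cancel_left, pow_one, smul_add, smul_smul, smul_smul,
      ← pow_succ]
    abel

/-- Lemma 2(ii) of the paper: in `H_{1,n+1}(q)`, for `n ≥ 1` and `k ≥ 1`,
`t_n^{-k} = ∑_{j=-k+1}^{-1} q^{j+1}(q^{-1}-1) t_{n-1}^j t_n^{-k-j} g_n^{-1}
  + q^{-k+1} g_n^{-1} t_{n-1}^{-k} g_n^{-1}`. -/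
theorem homflypt_stmt1
    {R : Type*} [CommRing R] {A : Type*} [Ring A] [Algebra R A]
    (q : Rˣ) (t tinv : A) (g ginv : ℕ → A)
    (ht : t * tinv = 1) (ht' : tinv * t = 1)
    (hg : ∀ i, g i * ginv i = 1) (hg' : ∀ i, ginv i * g i = 1)
    (hbt : g 1 * t * g 1 * t = t * g 1 * t * g 1)
    (hct : ∀ i, 2 ≤ i → t * g i = g i * t)
    (hbr : ∀ i, 1 ≤ i → g i * g (i+1) * g i = g (i+1) * g i * g (i+1))
    (hcm : ∀ i j, 1 ≤ i → i + 2 ≤ j → g i * g j = g j * g i)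
    (hq2 : ∀ i, 1 ≤ i → g i * g i = ((q : R) - 1) • g i + (q : R) • (1 : A))
    (tt ttinv : ℕ → A)
    (htt0 : tt 0 = t) (htts : ∀ i, tt (i+1) = g (i+1) * tt i * g (i+1))
    (htti0 : ttinv 0 = tinv)
    (httis : ∀ i, ttinv (i+1) = ginv (i+1) * ttinv i * ginv (i+1))
    (n k : ℕ) (hn : 1 ≤ n) (hk : 1 ≤ k) :
    ttinv n ^ k
      = (∑ j ∈ Finset.Icc (-(k : ℤ) + 1) (-1),
            (((q ^ (j + 1) : Rˣ) : R) * (((q⁻¹ : Rˣ) : R) - 1)) •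
              (zp (tt (n-1)) (ttinv (n-1)) j * zp (tt n) (ttinv n) (-(k : ℤ) - j) * ginv n))
        + ((q ^ (-(k : ℤ) + 1) : Rˣ) : R) • (ginv n * ttinv (n-1) ^ k * ginv n) := by
  obtain ⟨n, rfl⟩ : ∃ m, n = m + 1 := ⟨n - 1, by omega⟩
  obtain ⟨m, rfl⟩ : ∃ m, k = m + 1 := ⟨k - 1, by omega⟩
  rw [Nat.add_sub_cancel]
  have hinv := looping_inv t tinv g ginv tt ttinv ht hg htt0 htts htti0 httis
  have hinv' := looping_inv tinv t ginv g ttinv tt ht' hg' htti0 httis htt0 htts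
  have hcomm : tt n * tt (n+1) = tt (n+1) * tt n := by
    have hbraid := looping_braid t g tt hbt hct hbr hcm htt0 htts n
    rw [htts, hbraid]; simp only [mul_assoc]
  -- Both products of inverses are inverse to `tt n * tt (n+1) = tt (n+1) * tt n`.
  have hab : Commute (ttinv n) (ttinv (n+1)) := by
    refine left_inv_eq_right_inv (a := tt (n+1) * tt n) ?_ ?_
    · rw [mul_assoc, ← mul_assoc (ttinv (n+1)), hinv', one_mul, hinv']
    · rw [← hcomm, mul_assoc, ← mul_assoc (tt (n+1)), hinv, one_mul, hinv]
  have hqp : ((q⁻¹ : Rˣ) : R) * (q : R) = 1 := q.inv_mul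
  -- The quadratic relation, multiplied by `q⁻¹` and by `ginv * ginv`.
  have hh : ginv (n+1) * ginv (n+1)
      = ((q⁻¹ : Rˣ) : R) • (1 : A) + (((q⁻¹ : Rˣ) : R) - 1) • ginv (n+1) := by
    have h1 : (1 : A) = ((q : R) - 1) • ginv (n+1) + (q : R) • (ginv (n+1) * ginv (n+1)) := by
      calc (1 : A) = ginv (n+1) * (g (n+1) * g (n+1)) * ginv (n+1) := by
            rw [← mul_assoc, hg', one_mul, hg]
        _ = _ := by
            rw [hq2 (n+1) (by omega)]
            simp only [mul_add, add_mul, mul_smul_comm, smul_mul_assoc, mul_one, hg', one_mul]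
    have h2 : ((q⁻¹ : Rˣ) : R) • (1 : A)
        = (1 - ((q⁻¹ : Rˣ) : R)) • ginv (n+1) + ginv (n+1) * ginv (n+1) := by
      conv_lhs => rw [h1]
      rw [smul_add, smul_smul, smul_smul, mul_sub, hqp, mul_one, one_smul]
    rw [h2]
    module
  rw [pow_expansion _ _ _ _ (httis n) hab hh m]
  congr 1
  · refine Finset.sum_nbij' (fun i => -((i : ℤ) + 1)) (fun j => (-j - 1).toNat) ?_ ?_ ?_ ?_ ?_
    · intro i hi
      simp only [Finset.mem_range, Finset.mem_Icc] at *
      push_cast; omega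
    · intro j hj
      simp only [Finset.mem_range, Finset.mem_Icc] at *
      push_cast at hj; omega
    · intro i hi; omega
    · intro j hj
      simp only [Finset.mem_Icc] at hj
      omega
    · intro i hi
      have hi' := Finset.mem_range.mp hi
      have e1 : (-((i : ℤ) + 1) + 1) = -(i : ℤ) := by ring
      have e2 : (-(-((i : ℤ) + 1))).toNat = i + 1 := by omega
      have e3 : (-(-((m + 1 : ℕ) : ℤ) - -((i : ℤ) + 1))).toNat = m - i := by omega
      rw [zp, if_neg (by omega), zp, if_neg (by push_cast; omega), e1, e2, e3, zpow_neg,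
        zpow_natCast, ← inv_pow, Units.val_pow_eq_pow_val]
  · have e : (-((m + 1 : ℕ) : ℤ) + 1) = -(m : ℤ) := by push_cast; ring
    rw [e, zpow_neg, zpow_natCast, ← inv_pow, Units.val_pow_eq_pow_val]
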